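/- arXiv:2505.21694 — 2 statements merged into one kernel-verified Lean document; each statement's English description precedes it below -/
import Mathlib

section
/- Let G be a graph with n vertices, m edges, and average degree d, and let {y_v : v ∈ V(G)} be unit vectors in R^N. Then G has a bisection of size at least m/2 − (1/π)·Σ_{uv∈E(G)} arcsin(⟨y_u,y_v⟩) − d·√( n + (4/π)·Σ_{{u,v}} arcsin(⟨y_u,y_v⟩) ), where the last sum is over all unordered pairs of distinct vertices. -/
open Finset SimpleGraph RealInnerProductSpace

/-- `epairs G A B` is the number of ordered pairs `(u,v) ∈ A × B` with `u ~ v`;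
for disjoint `A`, `B` this is the number of edges between `A` and `B`. -/
def epairs {V : Type*} [DecidableEq V] (G : SimpleGraph V) [DecidableRel G.Adj]
    (A B : Finset V) : ℕ :=
  ((A ×ˢ B).filter fun p => G.Adj p.1 p.2).card

lemma epairs_comm' {V : Type*} [DecidableEq V] (G : SimpleGraph V) [DecidableRel G.Adj]
    (A B : Finset V) : epairs G A B = epairs G B A := by
  unfold epairs
  apply Finset.card_bij (fun p _ => (p.2, p.1))
  · intro p hp
    simp only [Finset.mem_filter, Finset.mem_product] at hp ⊢
    exact ⟨⟨hp.1.2, hp.1.1⟩, hp.2.symm⟩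
  · rintro ⟨a, b⟩ _ ⟨c, d⟩ _ h
    simp only [Prod.mk.injEq] at h ⊢
    exact ⟨h.2, h.1⟩
  · rintro ⟨a, b⟩ hp
    simp only [Finset.mem_filter, Finset.mem_product] at hp
    refine ⟨(b, a), ?_, rfl⟩
    simp only [Finset.mem_filter, Finset.mem_product]
    exact ⟨⟨hp.1.2, hp.1.1⟩, hp.2.symm⟩

lemma step_move {V : Type*} [Fintype V] [DecidableEq V]
    (G : SimpleGraph V) [DecidableRel G.Adj] (X : Finset V)
    (h : Xᶜ.card + 2 ≤ X.card) :
    ∃ Y : Finset V, Y.card + 1 = X.card ∧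
      (epairs G X Xᶜ : ℝ) ≤ epairs G Y Yᶜ +
        2 * (2 * (G.edgeFinset.card : ℝ) / (Fintype.card V : ℝ)) := by
  have hn : X.card + Xᶜ.card = Fintype.card V := Finset.card_add_card_compl X
  have hex : ∃ v ∈ X, G.degree v * Fintype.card V ≤ 4 * G.edgeFinset.card := by
    by_contra! hcon
    have hne : X.Nonempty := by
      rw [← Finset.card_pos]; omega
    have h1 : ∑ v ∈ X, 4 * G.edgeFinset.card < ∑ v ∈ X, G.degree v * Fintype.card V :=
      Finset.sum_lt_sum_of_nonempty hne hcon
    have h2 : ∑ v ∈ X, G.degree v ≤ 2 * G.edgeFinset.card := by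
      rw [← G.sum_degrees_eq_twice_card_edges]
      exact Finset.sum_le_sum_of_subset (Finset.subset_univ X)
    rw [Finset.sum_const, smul_eq_mul, ← Finset.sum_mul] at h1
    have h3 : Fintype.card V ≤ 2 * X.card := by omega
    nlinarith [Nat.mul_le_mul_right (Fintype.card V) h2,
      Nat.mul_le_mul_left (2 * G.edgeFinset.card) h3]
  obtain ⟨v, hv, hd⟩ := hex
  refine ⟨X.erase v, Finset.card_erase_add_one hv, ?_⟩
  have hsub : epairs G X Xᶜ ≤ epairs G (X.erase v) (X.erase v)ᶜ + G.degree v := by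
    unfold epairs
    rw [← G.card_neighborFinset_eq_degree v]
    refine le_trans (Finset.card_le_card (t := (((X.erase v) ×ˢ (X.erase v)ᶜ).filter
      fun p => G.Adj p.1 p.2) ∪ (G.neighborFinset v).image (fun w => (v, w))) ?_) ?_
    · rintro ⟨a, b⟩ hp
      simp only [Finset.mem_filter, Finset.mem_product, Finset.mem_compl, Finset.mem_union,
        Finset.mem_image, Finset.mem_erase, SimpleGraph.mem_neighborFinset] at hp ⊢
      by_cases hav : a = v
      · right
        subst hav
        exact ⟨b, hp.2, rfl⟩
      · left
        exact ⟨⟨⟨hav, hp.1.1⟩, fun hh => hp.1.2 hh.2⟩, hp.2⟩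
    · exact (Finset.card_union_le _ _).trans (Nat.add_le_add_left Finset.card_image_le _)
  have hpos : (0 : ℝ) < Fintype.card V := by
    have : 0 < Fintype.card V := by omega
    exact_mod_cast this
  have h4 : (G.degree v : ℝ) ≤ 2 * (2 * (G.edgeFinset.card : ℝ) / (Fintype.card V : ℝ)) := by
    rw [← mul_div_assoc, le_div_iff₀ hpos]
    have : (G.degree v : ℝ) * Fintype.card V ≤ 4 * G.edgeFinset.card := by exact_mod_cast hd
    linarith
  have h5 : (epairs G X Xᶜ : ℝ) ≤ epairs G (X.erase v) (X.erase v)ᶜ + G.degree v := by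
    exact_mod_cast hsub
  linarith

lemma rebalance {V : Type*} [Fintype V] [DecidableEq V]
    (G : SimpleGraph V) [DecidableRel G.Adj] (k : ℕ) : ∀ (X : Finset V),
    |(X.card : ℤ) - (Xᶜ.card : ℤ)| ≤ k →
    ∃ A : Finset V, |(A.card : ℤ) - (Aᶜ.card : ℤ)| ≤ 1 ∧
      (epairs G X Xᶜ : ℝ) - (2 * (G.edgeFinset.card : ℝ) / (Fintype.card V : ℝ)) *
        |(X.card : ℝ) - (Xᶜ.card : ℝ)| ≤ epairs G A Aᶜ := by
  have hd0 : 0 ≤ (2 * (G.edgeFinset.card : ℝ) / (Fintype.card V : ℝ)) := by positivity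
  induction k with
  | zero =>
    intro X hX
    refine ⟨X, by push_cast at hX; linarith, ?_⟩
    have := mul_nonneg hd0 (abs_nonneg ((X.card : ℝ) - (Xᶜ.card : ℝ)))
    linarith
  | succ k ih =>
    have key : ∀ X : Finset V, |(X.card : ℤ) - (Xᶜ.card : ℤ)| ≤ (k + 1 : ℕ) →
        Xᶜ.card + 2 ≤ X.card → ∃ A : Finset V, |(A.card : ℤ) - (Aᶜ.card : ℤ)| ≤ 1 ∧
        (epairs G X Xᶜ : ℝ) - (2 * (G.edgeFinset.card : ℝ) / (Fintype.card V : ℝ)) *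
        |(X.card : ℝ) - (Xᶜ.card : ℝ)| ≤ epairs G A Aᶜ := by
      intro X hX h
      obtain ⟨Y, hY, he⟩ := step_move G X h
      have c1 := Finset.card_add_card_compl X
      have c2 := Finset.card_add_card_compl Y
      have hYc : Yᶜ.card = Xᶜ.card + 1 := by omega
      have hXY : (X.card : ℝ) = Y.card + 1 := by exact_mod_cast hY.symm
      have hYc' : (Yᶜ.card : ℝ) = Xᶜ.card + 1 := by exact_mod_cast hYc
      have hle : (Yᶜ.card : ℝ) ≤ Y.card := by
        have : Yᶜ.card ≤ Y.card := by omega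
        exact_mod_cast this
      obtain ⟨A, hA, hA2⟩ := ih Y (by rw [abs_le] at hX ⊢; push_cast at hX; omega)
      refine ⟨A, hA, le_trans ?_ hA2⟩
      rw [abs_of_nonneg (by linarith), abs_of_nonneg (by linarith), hXY, hYc']
      linarith
    intro X hX
    by_cases h1 : Xᶜ.card + 2 ≤ X.card
    · exact key X hX h1
    by_cases h2 : X.card + 2 ≤ Xᶜ.card
    · have := key Xᶜ (by rw [compl_compl, abs_sub_comm]; exact hX) (by rw [compl_compl]; exact h2)
      rw [compl_compl, abs_sub_comm, epairs_comm'] at this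
      exact this
    · refine ⟨X, by rw [abs_le]; omega, ?_⟩
      have := mul_nonneg hd0 (abs_nonneg ((X.card : ℝ) - (Xᶜ.card : ℝ)))
      linarith

open MeasureTheory ProbabilityTheory

noncomputable def sg (x : ℝ) : ℝ := if 0 ≤ x then 1 else -1

lemma measurable_sg : Measurable sg :=
  Measurable.ite measurableSet_Ici measurable_const measurable_const

lemma sg_mul_pos {r : ℝ} (hr : 0 < r) (x : ℝ) : sg (r * x) = sg x := by
  unfold sg
  simp only [mul_nonneg_iff_of_pos_left hr]

lemma sg_neg {x : ℝ} (hx : x ≠ 0) : sg (-x) = - sg x := by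
  unfold sg
  rcases lt_or_gt_of_ne hx with h | h
  · rw [if_pos (by linarith), if_neg (by linarith)]; norm_num
  · rw [if_neg (by linarith), if_pos (by linarith)]

lemma polar_gauss (F : ℝ × ℝ → ℝ) (hF : ∀ r x y, 0 < r → F (r * x, r * y) = F (x, y)) :
    ∫ p, F p ∂((gaussianReal 0 1).prod (gaussianReal 0 1)) =
      (∫ r in Set.Ioi (0:ℝ), r * ((√(2 * Real.pi))⁻¹ ^ 2 * Real.exp (-r ^ 2 / 2))) *
        ∫ θ in Set.Ioo (-Real.pi) Real.pi, F (Real.cos θ, Real.sin θ) := by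
  rw [gaussianReal_of_var_ne_zero 0 one_ne_zero, prod_withDensity (measurable_gaussianPDF _ _)
    (measurable_gaussianPDF _ _), integral_withDensity_eq_integral_toReal_smul (by fun_prop)
    (by simp [gaussianPDF, ENNReal.mul_lt_top]), ← Measure.volume_eq_prod,
    ← integral_comp_polarCoord_symm, ← setIntegral_prod_mul, ← Measure.volume_eq_prod]
  apply setIntegral_congr_fun (polarCoord.open_target.measurableSet)
  rintro ⟨r, θ⟩ h
  have hr : 0 < r := h.1
  simp only [polarCoord_symm_apply, smul_eq_mul, ENNReal.toReal_mul, toReal_gaussianPDF,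
    gaussianPDFReal]
  rw [hF r _ _ hr]
  have : Real.exp (-r ^ 2 / 2) = Real.exp (-(r * Real.cos θ) ^ 2 / 2)
      * Real.exp (-(r * Real.sin θ) ^ 2 / 2) := by
    rw [← Real.exp_add]
    congr 1
    have := Real.sin_sq_add_cos_sq θ
    linear_combination (-r^2/2) * (-this)
  rw [this]
  simp
  ring

lemma polar_gauss' (F : ℝ × ℝ → ℝ) (hF : ∀ r x y, 0 < r → F (r * x, r * y) = F (x, y)) :
    ∫ p, F p ∂((gaussianReal 0 1).prod (gaussianReal 0 1)) =
      (1 / (2 * Real.pi)) *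
        ∫ θ in (-Real.pi)..Real.pi, F (Real.cos θ, Real.sin θ) := by
  have h1 := polar_gauss (fun _ => 1) (by simp)
  rw [polar_gauss F hF, intervalIntegral.integral_of_le (by linarith [Real.pi_pos]),
    integral_Ioc_eq_integral_Ioo]
  congr 1
  have hp := Real.pi_pos
  simp only [integral_const, probReal_univ, smul_eq_mul, mul_one, measureReal_restrict_apply_univ,
    Real.volume_real_Ioo, sub_neg_eq_add] at h1
  rw [max_eq_left (by linarith)] at h1
  rw [eq_div_iff (by positivity), h1]
  ring

lemma angle_int (α : ℝ) (h0 : 0 ≤ α) (h1 : α ≤ Real.pi) :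
    ∫ θ in (-Real.pi)..Real.pi, sg (Real.cos θ) * sg (Real.cos (θ - α)) =
      2 * (Real.pi - 2 * α) := by
  have hp := Real.pi_pos
  set f : ℝ → ℝ := fun θ => sg (Real.cos θ) * sg (Real.cos (θ - α)) with hf
  have hm : Measurable f := by
    apply Measurable.mul
    · exact measurable_sg.comp (by fun_prop)
    · exact measurable_sg.comp (by fun_prop)
  have hb : ∀ x, ‖f x‖ ≤ 1 := by
    intro x
    simp only [hf, sg, Real.norm_eq_abs]
    split_ifs <;> norm_num
  have hI : ∀ a b, IntervalIntegrable f volume a b := fun a b =>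
    (intervalIntegrable_const (c := (1:ℝ))).mono_fun hm.aestronglyMeasurable
      (Filter.Eventually.of_forall (by intro x; simpa using hb x))
  have hper : Function.Periodic f (2 * Real.pi) := by
    intro x
    simp only [hf]
    rw [Real.cos_add_two_pi, show x + 2 * Real.pi - α = (x - α) + 2 * Real.pi by ring,
      Real.cos_add_two_pi]
  have e1 : ∫ θ in (-Real.pi)..Real.pi, f θ = ∫ θ in (-(Real.pi/2))..(3 * Real.pi/2), f θ := by
    have := hper.intervalIntegral_add_eq (-Real.pi) (-(Real.pi/2))
    convert this using 2 <;> ring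
  -- piece integral
  have pc : ∀ (a b c : ℝ), a ≤ b → (∀ x ∈ Set.Ioo a b, f x = c) → ∫ x in a..b, f x = (b - a) * c := by
    intro a b c hab hc
    rw [intervalIntegral.integral_of_le hab, integral_Ioc_eq_integral_Ioo,
      setIntegral_congr_fun measurableSet_Ioo hc]
    simp [Real.volume_real_Ioo, hab]
  have cpos : ∀ x, -(Real.pi/2) < x → x < Real.pi/2 → sg (Real.cos x) = 1 := by
    intro x h h'
    exact if_pos (Real.cos_pos_of_mem_Ioo ⟨h, h'⟩).le
  have cneg : ∀ x, Real.pi/2 < x → x < 3 * Real.pi/2 → sg (Real.cos x) = -1 := by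
    intro x h h'
    exact if_neg (not_le.2 (Real.cos_neg_of_pi_div_two_lt_of_lt h (by linarith)))
  have cneg' : ∀ x, -(3 * Real.pi/2) < x → x < -(Real.pi/2) → sg (Real.cos x) = -1 := by
    intro x h h'
    rw [← Real.cos_neg]
    exact cneg _ (by linarith) (by linarith)
  rw [e1, ← intervalIntegral.integral_add_adjacent_intervals (hI _ (α - Real.pi/2)) (hI _ _),
    ← intervalIntegral.integral_add_adjacent_intervals (hI (α - Real.pi/2) (Real.pi/2)) (hI _ _),
    ← intervalIntegral.integral_add_adjacent_intervals (hI (Real.pi/2) (α + Real.pi/2)) (hI _ _),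
    pc _ _ (-1) (by linarith), pc _ _ 1 (by linarith), pc _ _ (-1) (by linarith),
    pc _ _ 1 (by linarith)]
  · ring
  · rintro x ⟨h, h'⟩
    simp only [hf]
    rw [cneg x (by linarith) (by linarith), cneg _ (by linarith) (by linarith)]; norm_num
  · rintro x ⟨h, h'⟩
    simp only [hf]
    rw [cneg x (by linarith) (by linarith), cpos _ (by linarith) (by linarith)]; norm_num
  · rintro x ⟨h, h'⟩
    simp only [hf]
    rw [cpos x (by linarith) (by linarith), cpos _ (by linarith) (by linarith)]; norm_num
  · rintro x ⟨h, h'⟩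
    simp only [hf]
    rw [cpos x (by linarith) (by linarith), cneg' _ (by linarith) (by linarith)]; norm_num

lemma charFunDual_std1 (L : StrongDual ℝ ℝ) :
    charFunDual (gaussianReal 0 1) L = Complex.exp (-(L 1) ^ 2 / 2 : ℝ) := by
  obtain ⟨a, ha⟩ : ∃ a : ℝ, ∀ x : ℝ, L x = a * x := by
    refine ⟨L 1, fun x => ?_⟩
    have := L.map_smul x 1
    simp at this
    rw [this, mul_comm]
  rw [charFunDual_apply]
  simp only [ha, mul_one]
  have h2 := charFun_gaussianReal (μ := 0) (v := 1) a
  rw [charFun_apply_real] at h2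
  push_cast at h2 ⊢
  rw [h2]
  congr 1
  simp
  ring

lemma law {N : ℕ} (u v : EuclideanSpace ℝ (Fin N)) (hu : ‖u‖ = 1) (hv : ‖v‖ = 1) (s : ℝ)
    (hs : ⟪u, v⟫ ^ 2 + s ^ 2 = 1) :
    (stdGaussian (EuclideanSpace ℝ (Fin N))).map (fun g => (⟪u, g⟫, ⟪v, g⟫)) =
    ((gaussianReal 0 1).prod (gaussianReal 0 1)).map (fun p => (p.1, ⟪u, v⟫ * p.1 + s * p.2)) := by
  set T : EuclideanSpace ℝ (Fin N) →L[ℝ] ℝ × ℝ := (innerSL ℝ u).prod (innerSL ℝ v) with hT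
  set S : ℝ × ℝ →L[ℝ] ℝ × ℝ := (ContinuousLinearMap.fst ℝ ℝ ℝ).prod
    (⟪u, v⟫ • ContinuousLinearMap.fst ℝ ℝ ℝ + s • ContinuousLinearMap.snd ℝ ℝ ℝ) with hS
  have e1 : (fun g => (⟪u, g⟫, ⟪v, g⟫)) = T := by ext g <;> simp [hT]
  have e2 : (fun p : ℝ × ℝ => (p.1, ⟪u, v⟫ * p.1 + s * p.2)) = S := by ext g <;> simp [hS]
  rw [e1, e2]
  apply Measure.ext_of_charFunDual
  ext L
  rw [charFunDual_map, charFunDual_map, charFunDual_stdGaussian, charFunDual_prod,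
    charFunDual_std1, charFunDual_std1, ← Complex.exp_add]
  have hL : ∀ p : ℝ × ℝ, L p = L (1, 0) * p.1 + L (0, 1) * p.2 := by
    rintro ⟨a, b⟩
    have h := L.map_add (a • (1, 0)) (b • (0, 1))
    rw [L.map_smul, L.map_smul] at h
    simp at h
    rw [h]; simp; ring
  set a := L (1, 0)
  set b := L (0, 1)
  have hn : L.comp T = innerSL ℝ (a • u + b • v) := by
    ext g
    simp only [ContinuousLinearMap.comp_apply, innerSL_apply_apply, inner_add_left,
      real_inner_smul_left]
    rw [hL]
    simp [hT]
  have h3 : (L.comp S).comp (ContinuousLinearMap.inl ℝ ℝ ℝ) 1 = a + b * ⟪u, v⟫ := by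
    simp only [ContinuousLinearMap.comp_apply]
    rw [hL]; simp [hS]
  have h4 : (L.comp S).comp (ContinuousLinearMap.inr ℝ ℝ ℝ) 1 = b * s := by
    simp only [ContinuousLinearMap.comp_apply]
    rw [hL]; simp [hS]
  rw [hn, innerSL_apply_norm, h3, h4]
  have h5 : ‖a • u + b • v‖ ^ 2 = (a + b * ⟪u, v⟫) ^ 2 + (b * s) ^ 2 := by
    rw [norm_add_sq_real, norm_smul, norm_smul, hu, hv, real_inner_smul_left,
      real_inner_smul_right]
    simp only [mul_one, Real.norm_eq_abs, sq_abs]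
    linear_combination (-b^2) * hs
  congr 1
  rw [← Complex.ofReal_pow, h5]
  push_cast
  ring

lemma groth {N : ℕ} (u v : EuclideanSpace ℝ (Fin N)) (hu : ‖u‖ = 1) (hv : ‖v‖ = 1) :
    ∫ g, sg ⟪u, g⟫ * sg ⟪v, g⟫ ∂(stdGaussian (EuclideanSpace ℝ (Fin N))) =
      2 / Real.pi * Real.arcsin ⟪u, v⟫ := by
  have hc := abs_real_inner_le_norm u v
  rw [hu, hv, mul_one, abs_le] at hc
  set c := ⟪u, v⟫ with hcdef
  set α := Real.arccos c with hα
  have hcos : Real.cos α = c := Real.cos_arccos hc.1 hc.2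
  have hl := law u v hu hv (Real.sin α) (by rw [← hcdef, ← hcos]; exact Real.cos_sq_add_sin_sq α)
  have hm : Measurable (fun p : ℝ × ℝ => sg p.1 * sg p.2) :=
    (measurable_sg.comp measurable_fst).mul (measurable_sg.comp measurable_snd)
  have e1 : ∫ g, sg ⟪u, g⟫ * sg ⟪v, g⟫ ∂(stdGaussian (EuclideanSpace ℝ (Fin N))) =
      ∫ p, sg p.1 * sg p.2 ∂((stdGaussian (EuclideanSpace ℝ (Fin N))).map
        (fun g => (⟪u, g⟫, ⟪v, g⟫))) := by
    rw [integral_map (by fun_prop) hm.aestronglyMeasurable]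
  rw [e1, hl, integral_map (by fun_prop) hm.aestronglyMeasurable,
    polar_gauss' (fun p => sg p.1 * sg (⟪u, v⟫ * p.1 + Real.sin α * p.2))]
  · have e2 : ∀ θ, ⟪u, v⟫ * Real.cos θ + Real.sin α * Real.sin θ = Real.cos (θ - α) := by
      intro θ
      rw [← hcdef, ← hcos, Real.cos_sub]; ring
    simp only [e2]
    rw [angle_int α (Real.arccos_nonneg _) (Real.arccos_le_pi _), hα, Real.arccos]
    have := Real.pi_pos
    field_simp
    ring
  · intro r x y hr
    simp only
    rw [sg_mul_pos hr, show ⟪u, v⟫ * (r * x) + Real.sin α * (r * y) =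
      r * (⟪u, v⟫ * x + Real.sin α * y) by ring, sg_mul_pos hr]

lemma sg_sq (x : ℝ) : sg x * sg x = 1 := by
  unfold sg; split_ifs <;> norm_num

lemma abs_sg (x : ℝ) : |sg x| ≤ 1 := by
  unfold sg; split_ifs <;> norm_num

lemma cut_formula {V : Type*} [Fintype V] [DecidableEq V]
    (G : SimpleGraph V) [DecidableRel G.Adj] (t : V → ℝ) :
    (epairs G (Finset.univ.filter fun v => 0 ≤ t v) (Finset.univ.filter fun v => 0 ≤ t v)ᶜ : ℝ) =
      (G.edgeFinset.card : ℝ) / 2 - 1 / 4 * ∑ p ∈ (Finset.univ ×ˢ Finset.univ).filter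
              (fun p : V × V => G.Adj p.1 p.2), sg (t p.1) * sg (t p.2) := by
  set X := Finset.univ.filter fun v => 0 ≤ t v with hX
  have hm : (∑ p ∈ (Finset.univ ×ˢ Finset.univ).filter
      (fun p : V × V => G.Adj p.1 p.2), (1 : ℝ)) = 2 * G.edgeFinset.card := by
    rw [Finset.sum_filter, Finset.sum_product]
    have := G.sum_degrees_eq_twice_card_edges
    have h2 : (∑ v, (G.degree v : ℝ)) = 2 * G.edgeFinset.card := by exact_mod_cast this
    rw [← h2]
    refine Finset.sum_congr rfl fun v _ => ?_
    rw [← Finset.sum_filter, ← G.card_neighborFinset_eq_degree, G.neighborFinset_eq_filter]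
    simp
  have hs : ∀ A B : Finset V, (epairs G A B : ℝ) = ∑ p ∈ (Finset.univ ×ˢ Finset.univ).filter
      (fun p : V × V => G.Adj p.1 p.2), if p.1 ∈ A ∧ p.2 ∈ B then (1:ℝ) else 0 := by
    intro A B
    unfold epairs
    rw [← Finset.sum_filter, Finset.sum_const, nsmul_eq_mul, mul_one]
    congr 2
    ext p
    simp only [Finset.mem_filter, Finset.mem_product, Finset.mem_univ, true_and]
    tauto
  have h2 : 2 * (epairs G X Xᶜ : ℝ) = epairs G X Xᶜ + epairs G Xᶜ X := by
    rw [epairs_comm' G Xᶜ X]; ring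
  have h3 : (epairs G X Xᶜ : ℝ) + epairs G Xᶜ X = ∑ p ∈ (Finset.univ ×ˢ Finset.univ).filter
      (fun p : V × V => G.Adj p.1 p.2), (1 / 2 * 1 - 1 / 2 * (sg (t p.1) * sg (t p.2))) := by
    rw [hs, hs, ← Finset.sum_add_distrib]
    refine Finset.sum_congr rfl fun p _ => ?_
    simp only [hX, Finset.mem_compl, Finset.mem_filter, Finset.mem_univ, true_and, sg]
    by_cases h1 : 0 ≤ t p.1 <;> by_cases h2 : 0 ≤ t p.2 <;> simp [h1, h2] <;> norm_num
  rw [Finset.sum_sub_distrib, ← Finset.mul_sum, ← Finset.mul_sum, hm] at h3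
  linarith

lemma size_formula {V : Type*} [Fintype V] [DecidableEq V] (t : V → ℝ) :
    ((Finset.univ.filter fun v => 0 ≤ t v).card : ℝ) -
      ((Finset.univ.filter fun v => 0 ≤ t v)ᶜ.card : ℝ) = ∑ v, sg (t v) := by
  unfold sg
  rw [Finset.sum_ite, ← Finset.compl_filter]
  simp [sub_eq_add_neg]

lemma sq_formula {V : Type*} [Fintype V] [DecidableEq V] (t : V → ℝ) :
    (∑ v, sg (t v)) ^ 2 = (Fintype.card V : ℝ) +
      ∑ p ∈ Finset.univ.offDiag, sg (t p.1) * sg (t p.2) := by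
  rw [sq, Finset.sum_mul_sum, ← Finset.sum_product', ← Finset.diag_union_offDiag,
    Finset.sum_union (Finset.disjoint_diag_offDiag _), Finset.sum_diag]
  simp [sg_sq]

lemma l1_le_l2 {Ω : Type*} [MeasurableSpace Ω] (μ : Measure Ω) [IsProbabilityMeasure μ]
    (S : Ω → ℝ) (h1 : Integrable S μ) (h2 : Integrable (fun x => S x ^ 2) μ) :
    ∫ x, |S x| ∂μ ≤ √(∫ x, S x ^ 2 ∂μ) := by
  apply Real.le_sqrt_of_sq_le
  set a := ∫ x, |S x| ∂μ with ha
  have h0 : 0 ≤ ∫ x, (|S x| - a) ^ 2 ∂μ := integral_nonneg fun x => sq_nonneg _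
  have e : ∀ x, (|S x| - a) ^ 2 = S x ^ 2 - 2 * a * |S x| + a ^ 2 := by
    intro x; rw [sub_sq, sq_abs]; ring
  simp_rw [e] at h0
  have h12 : Integrable (fun x => S x ^ 2 - 2 * a * |S x|) μ := h2.sub (h1.abs.const_mul _)
  rw [integral_add h12 (integrable_const _), integral_sub h2 (h1.abs.const_mul _), integral_const_mul, ← ha] at h0
  simp at h0
  nlinarith

/-- Let `G` have `n` vertices, `m` edges and average degree `d = 2m/n`, and let
`{y_v}` be unit vectors in `ℝ^N`.  Then `G` has a bisection of size at least
`m/2 − (1/π)·Σ_{uv∈E} arcsin⟨y_u,y_v⟩ − d·√(n + (4/π)·Σ_{{u,v}} arcsin⟨y_u,y_v⟩)`,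
the last sum over unordered pairs of distinct vertices (sums over edges and over
unordered pairs are written as halves of sums over ordered pairs). -/
theorem stmt_17 {V : Type*} [Fintype V] [DecidableEq V]
    (G : SimpleGraph V) [DecidableRel G.Adj] {N : ℕ}
    (y : V → EuclideanSpace ℝ (Fin N)) (hy : ∀ v, ‖y v‖ = 1) :
    ∃ A B : Finset V, A ∪ B = Finset.univ ∧ Disjoint A B ∧
      |(A.card : ℤ) - (B.card : ℤ)| ≤ 1 ∧
      (G.edgeFinset.card : ℝ) / 2
        - (1 / Real.pi) * ((1 / 2 : ℝ) *
            ∑ p ∈ (Finset.univ ×ˢ Finset.univ).filter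
              (fun p : V × V => G.Adj p.1 p.2), Real.arcsin ⟪y p.1, y p.2⟫)
        - (2 * (G.edgeFinset.card : ℝ) / (Fintype.card V : ℝ)) *
            Real.sqrt ((Fintype.card V : ℝ) + (4 / Real.pi) * ((1 / 2 : ℝ) *
              ∑ p ∈ Finset.univ.offDiag, Real.arcsin ⟪y p.1, y p.2⟫))
      ≤ (epairs G A B : ℝ) := by
  classical
  set μ := stdGaussian (EuclideanSpace ℝ (Fin N)) with hμ
  set d : ℝ := 2 * (G.edgeFinset.card : ℝ) / (Fintype.card V : ℝ) with hd
  have hd0 : 0 ≤ d := by positivity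
  have hms : ∀ v, Measurable fun g : EuclideanSpace ℝ (Fin N) => sg ⟪y v, g⟫ := fun v =>
    measurable_sg.comp (by fun_prop)
  have hI2 : ∀ u v, Integrable (fun g => sg ⟪y u, g⟫ * sg ⟪y v, g⟫) μ := by
    intro u v
    refine Integrable.of_bound ((hms u).mul (hms v)).aestronglyMeasurable 1
      (Filter.Eventually.of_forall fun g => ?_)
    rw [Real.norm_eq_abs, abs_mul]
    exact mul_le_one₀ (abs_sg _) (abs_nonneg _) (abs_sg _)
  have hI1 : ∀ u, Integrable (fun g => sg ⟪y u, g⟫) μ := by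
    intro u
    exact Integrable.of_bound (hms u).aestronglyMeasurable 1
      (Filter.Eventually.of_forall fun g => abs_sg _)
  set S : EuclideanSpace ℝ (Fin N) → ℝ := fun g => ∑ v, sg ⟪y v, g⟫ with hS
  set C : EuclideanSpace ℝ (Fin N) → ℝ := fun g => (G.edgeFinset.card : ℝ) / 2 -
    1 / 4 * ∑ p ∈ (Finset.univ ×ˢ Finset.univ).filter
              (fun p : V × V => G.Adj p.1 p.2), sg ⟪y p.1, g⟫ * sg ⟪y p.2, g⟫ with hC
  have hSI : Integrable S μ := integrable_finsetSum _ fun v _ => hI1 v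
  have hSq : (fun g => S g ^ 2) = fun g => (Fintype.card V : ℝ) +
      ∑ p ∈ Finset.univ.offDiag, sg ⟪y p.1, g⟫ * sg ⟪y p.2, g⟫ := by
    funext g
    exact sq_formula fun v => ⟪y v, g⟫
  have hsumI : ∀ P : Finset (V × V), Integrable (fun g =>
      ∑ p ∈ P, sg ⟪y p.1, g⟫ * sg ⟪y p.2, g⟫) μ := fun P =>
    integrable_finsetSum _ fun p _ => hI2 p.1 p.2
  have hsum : ∀ P : Finset (V × V), ∫ g, ∑ p ∈ P, sg ⟪y p.1, g⟫ * sg ⟪y p.2, g⟫ ∂μ =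
      2 / Real.pi * ∑ p ∈ P, Real.arcsin ⟪y p.1, y p.2⟫ := by
    intro P
    rw [integral_finsetSum _ fun p _ => hI2 p.1 p.2, Finset.mul_sum]
    exact Finset.sum_congr rfl fun p _ => groth _ _ (hy _) (hy _)
  have hSqI : Integrable (fun g => S g ^ 2) μ := by
    rw [hSq]
    exact (integrable_const _).add (hsumI _)
  have hCI : Integrable C μ := (integrable_const _).sub ((hsumI _).const_mul _)
  have hES : ∫ g, S g ^ 2 ∂μ = (Fintype.card V : ℝ) + (4 / Real.pi) * ((1 / 2 : ℝ) *
              ∑ p ∈ Finset.univ.offDiag, Real.arcsin ⟪y p.1, y p.2⟫) := by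
    rw [hSq, integral_add (integrable_const _) (hsumI _), hsum]
    simp
    ring
  have hEC : ∫ g, C g ∂μ = (G.edgeFinset.card : ℝ) / 2
        - (1 / Real.pi) * ((1 / 2 : ℝ) *
            ∑ p ∈ (Finset.univ ×ˢ Finset.univ).filter
              (fun p : V × V => G.Adj p.1 p.2), Real.arcsin ⟪y p.1, y p.2⟫) := by
    rw [hC, integral_sub (integrable_const _) ((hsumI _).const_mul _), integral_const_mul, hsum]
    simp
    ring
  obtain ⟨g, hg⟩ := exists_integral_le (hCI.sub (hSI.abs.const_mul d))
  have hl := l1_le_l2 μ S hSI hSqI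
  rw [integral_sub' hCI (hSI.abs.const_mul d), integral_const_mul, hEC] at hg
  rw [hES] at hl
  set X := Finset.univ.filter fun v => 0 ≤ ⟪y v, g⟫ with hX
  obtain ⟨A, hA, hA2⟩ := rebalance G _ X (Int.self_le_toNat _)
  refine ⟨A, Aᶜ, Finset.union_compl A, disjoint_compl_right, hA, le_trans ?_ hA2⟩
  have f1 := cut_formula G fun v => ⟪y v, g⟫
  have f2 := size_formula fun v => ⟪y v, g⟫
  rw [← hX] at f1 f2
  have f1' : (epairs G X Xᶜ : ℝ) = C g := f1
  have f2' : (X.card : ℝ) - (Xᶜ.card : ℝ) = S g := f2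
  rw [f1', f2', ← hd]
  simp only [Pi.sub_apply] at hg
  have := mul_le_mul_of_nonneg_left hl hd0
  linarith
end

section
/- Let G be a graph with m edges and let {x_u : u ∈ V(G)} be non-zero vectors in R^N. Then G has a cut of size at least m/2 − (1/π)·Σ_{uv∈E(G)} arcsin( ⟨x_u, x_v⟩ / (‖x_u‖·‖x_v‖) ). -/
open Finset SimpleGraph RealInnerProductSpace

open MeasureTheory

open Classical in
noncomputable def gwInd (a b : ℝ) : ℝ := if (0 ≤ a ↔ 0 ≤ b) then 0 else 1

lemma gwInd_nonneg (a b : ℝ) : 0 ≤ gwInd a b := by unfold gwInd; split_ifs <;> norm_num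
lemma gwInd_le (a b : ℝ) : gwInd a b ≤ 1 := by unfold gwInd; split_ifs <;> norm_num
lemma gwInd_mul {r s : ℝ} (hr : 0 < r) (hs : 0 < s) (a b : ℝ) :
    gwInd (r * a) (s * b) = gwInd a b := by
  unfold gwInd; simp [mul_nonneg_iff_of_pos_left, hr, hs]
lemma gwInd_meas : Measurable (fun p : ℝ × ℝ => gwInd p.1 p.2) := by
  classical
  have : (fun p : ℝ × ℝ => gwInd p.1 p.2) = fun p => if 0 ≤ p.1 then (if 0 ≤ p.2 then (0:ℝ) else 1)
      else (if 0 ≤ p.2 then (1:ℝ) else 0) := by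
    ext p; unfold gwInd; by_cases h1 : 0 ≤ p.1 <;> by_cases h2 : 0 ≤ p.2 <;> simp [h1, h2]
  rw [this]
  have m1 : MeasurableSet {p : ℝ × ℝ | 0 ≤ p.1} := measurableSet_le measurable_const measurable_fst
  have m2 : MeasurableSet {p : ℝ × ℝ | 0 ≤ p.2} := measurableSet_le measurable_const measurable_snd
  exact Measurable.ite m1 (Measurable.ite m2 measurable_const measurable_const)
    (Measurable.ite m2 measurable_const measurable_const)

lemma gwInd_int {α : Type*} [MeasurableSpace α] (μ : Measure α) [IsFiniteMeasure μ]
    {f g : α → ℝ} (hf : Measurable f) (hg : Measurable g) :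
    Integrable (fun a => gwInd (f a) (g a)) μ := by
  refine Integrable.of_bound (C := 1) (gwInd_meas.comp (hf.prodMk hg)).aestronglyMeasurable ?_
  refine Filter.Eventually.of_forall fun a => ?_
  rw [Real.norm_eq_abs, abs_of_nonneg (gwInd_nonneg _ _)]; exact gwInd_le _ _

lemma gw_circle {θ : ℝ} (h0 : 0 < θ) (h1 : θ < Real.pi) (φ : ℝ) :
    2 * θ ≤ ∫ t in (0:ℝ)..(2 * Real.pi), gwInd (Real.cos (t + φ)) (Real.cos (t + φ - θ)) := by
  set F : ℝ → ℝ := fun s => gwInd (Real.cos s) (Real.cos (s - θ)) with hF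
  have hper : Function.Periodic F (2 * Real.pi) := by
    intro s
    simp only [hF]
    rw [Real.cos_add_two_pi, show s + 2 * Real.pi - θ = s - θ + 2 * Real.pi by ring,
      Real.cos_add_two_pi]
  have hii : ∀ a b, IntervalIntegrable F volume a b := by
    intro a b
    constructor <;> exact gwInd_int _ (by fun_prop) (by fun_prop)
  have e1 : ∫ t in (0:ℝ)..(2 * Real.pi), gwInd (Real.cos (t + φ)) (Real.cos (t + φ - θ))
      = ∫ s in (-(Real.pi/2))..(-(Real.pi/2) + 2 * Real.pi), F s := by
    rw [← hper.intervalIntegral_add_eq φ (-(Real.pi/2))]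
    rw [show (∫ t in (0:ℝ)..(2 * Real.pi), gwInd (Real.cos (t + φ)) (Real.cos (t + φ - θ)))
      = ∫ t in (0:ℝ)..(2 * Real.pi), F (t + φ) from rfl, intervalIntegral.integral_comp_add_right]
    congr 1 <;> ring
  rw [e1]
  have hpi := Real.pi_pos
  rw [← intervalIntegral.integral_add_adjacent_intervals (hii _ (-(Real.pi/2) + θ)) (hii _ _),
    ← intervalIntegral.integral_add_adjacent_intervals (hii (-(Real.pi/2) + θ) (Real.pi/2)) (hii _ _),
    ← intervalIntegral.integral_add_adjacent_intervals (hii (Real.pi/2) (Real.pi/2 + θ)) (hii _ _)]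
  have n1 : 0 ≤ ∫ s in (-(Real.pi/2) + θ)..(Real.pi/2), F s :=
    intervalIntegral.integral_nonneg (by linarith) fun _ _ => gwInd_nonneg _ _
  have n2 : 0 ≤ ∫ s in (Real.pi/2 + θ)..(-(Real.pi/2) + 2 * Real.pi), F s :=
    intervalIntegral.integral_nonneg (by linarith) fun _ _ => gwInd_nonneg _ _
  have i1 : θ ≤ ∫ s in (-(Real.pi/2))..(-(Real.pi/2) + θ), F s := by
    have := intervalIntegral.integral_mono_on_of_le_Ioo (f := fun _ => (1:ℝ)) (g := F)
      (a := -(Real.pi/2)) (b := -(Real.pi/2) + θ) (μ := volume) (by linarith) (by simp) (hii _ _) ?_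
    · simpa using this
    intro s hs
    have c1 : 0 < Real.cos s := Real.cos_pos_of_mem_Ioo ⟨hs.1, by linarith [hs.2]⟩
    have c2 : Real.cos (s - θ) < 0 := by
      rw [← Real.cos_neg]
      exact Real.cos_neg_of_pi_div_two_lt_of_lt (by linarith [hs.2]) (by linarith [hs.1])
    simp [hF, gwInd, c1.le, not_le.2 c2]
  have i2 : θ ≤ ∫ s in (Real.pi/2)..(Real.pi/2 + θ), F s := by
    have := intervalIntegral.integral_mono_on_of_le_Ioo (f := fun _ => (1:ℝ)) (g := F)
      (a := (Real.pi/2)) (b := (Real.pi/2) + θ) (μ := volume) (by linarith) (by simp) (hii _ _) ?_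
    · simpa using this
    intro s hs
    have c1 : 0 < Real.cos (s - θ) := Real.cos_pos_of_mem_Ioo ⟨by linarith [hs.1], by linarith [hs.2]⟩
    have c2 : Real.cos s < 0 :=
      Real.cos_neg_of_pi_div_two_lt_of_lt (by linarith [hs.1]) (by linarith [hs.2])
    simp [hF, gwInd, c1.le, not_le.2 c2]
  linarith

section
variable {E : Type*} [NormedAddCommGroup E] [InnerProductSpace ℝ E] 

lemma gw_rot [FiniteDimensional ℝ E] (u v : E) (hu : ‖u‖ = 1) (hv : ‖v‖ = 1) (huv : ⟪u, v⟫ = 0) (t : ℝ) :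
    ∃ R : E ≃ₗᵢ[ℝ] E, ∀ g, R g = g + ((Real.cos t - 1) * ⟪g, u⟫ - Real.sin t * ⟪g, v⟫) • u
      + (Real.sin t * ⟪g, u⟫ + (Real.cos t - 1) * ⟪g, v⟫) • v := by
  let L : E →ₗ[ℝ] E :=
    { toFun := fun g => g + ((Real.cos t - 1) * ⟪g, u⟫ - Real.sin t * ⟪g, v⟫) • u
        + (Real.sin t * ⟪g, u⟫ + (Real.cos t - 1) * ⟪g, v⟫) • v
      map_add' := by intro a b; simp only [inner_add_left]; module
      map_smul' := by
        intro c a; simp only [real_inner_smul_left, RingHom.id_apply]; module }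
  have huu : ⟪u, u⟫ = 1 := by rw [real_inner_self_eq_norm_sq, hu]; norm_num
  have hvv : ⟪v, v⟫ = 1 := by rw [real_inner_self_eq_norm_sq, hv]; norm_num
  have hvu : ⟪v, u⟫ = 0 := by rw [real_inner_comm, huv]
  have hL : ∀ g, ‖L g‖ = ‖g‖ := by
    intro g
    have : ‖L g‖ ^ 2 = ‖g‖ ^ 2 := by
      rw [← real_inner_self_eq_norm_sq, ← real_inner_self_eq_norm_sq]
      simp only [L, LinearMap.coe_mk, AddHom.coe_mk, inner_add_left, inner_add_right,
        real_inner_smul_left, real_inner_smul_right, huu, hvv, huv, hvu]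
      have gu : (⟪u, g⟫ : ℝ) = ⟪g, u⟫ := real_inner_comm _ _
      have gv : (⟪v, g⟫ : ℝ) = ⟪g, v⟫ := real_inner_comm _ _
      rw [gu, gv]
      have := Real.sin_sq_add_cos_sq t
      generalize Real.sin t = s at *
      generalize Real.cos t = c at *
      generalize (⟪g, u⟫ : ℝ) = a
      generalize (⟪g, v⟫ : ℝ) = b
      linear_combination (a^2 + b^2) * this
    exact (sq_eq_sq₀ (norm_nonneg _) (norm_nonneg _)).1 this
  exact ⟨(⟨L, hL⟩ : E →ₗᵢ[ℝ] E).toLinearIsometryEquiv rfl, fun g => rfl⟩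

lemma gw_plane [FiniteDimensional ℝ E] [MeasurableSpace E] [BorelSpace E] (μ : Measure E)
    [IsProbabilityMeasure μ] (hμ : ∀ R : E ≃ₗᵢ[ℝ] E, MeasurePreserving R μ μ)
    (h0 : ∀ e : E, e ≠ 0 → ∀ᵐ g ∂μ, (⟪g, e⟫ : ℝ) ≠ 0)
    (u v : E) (hu : ‖u‖ = 1) (hv : ‖v‖ = 1) (huv : ⟪u, v⟫ = 0) {θ : ℝ} (hθ0 : 0 < θ)
    (hθ1 : θ < Real.pi) :
    θ / Real.pi ≤ ∫ g, gwInd ⟪g, u⟫ (Real.cos θ * ⟪g, u⟫ + Real.sin θ * ⟪g, v⟫) ∂μ := by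
  have hpi := Real.pi_pos
  have huu : ⟪u, u⟫ = 1 := by rw [real_inner_self_eq_norm_sq, hu]; norm_num
  have hvv : ⟪v, v⟫ = 1 := by rw [real_inner_self_eq_norm_sq, hv]; norm_num
  have hvu : ⟪v, u⟫ = 0 := by rw [real_inner_comm, huv]
  set I := ∫ g, gwInd ⟪g, u⟫ (Real.cos θ * ⟪g, u⟫ + Real.sin θ * ⟪g, v⟫) ∂μ with hI
  let a : ℝ → E → ℝ := fun t g => Real.cos t * ⟪g, u⟫ - Real.sin t * ⟪g, v⟫
  let b : ℝ → E → ℝ := fun t g => Real.sin t * ⟪g, u⟫ + Real.cos t * ⟪g, v⟫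
  have hrot : ∀ t, ∫ g, gwInd (a t g) (Real.cos θ * a t g + Real.sin θ * b t g) ∂μ = I := by
    intro t
    obtain ⟨R, hR⟩ := gw_rot u v hu hv huv t
    rw [hI, ← (hμ R).integral_comp R.toHomeomorph.measurableEmbedding
      (fun g => gwInd ⟪g, u⟫ (Real.cos θ * ⟪g, u⟫ + Real.sin θ * ⟪g, v⟫))]
    congr 1; ext g
    have e1 : ⟪R g, u⟫ = a t g := by
      rw [hR]; simp only [inner_add_left, real_inner_smul_left, huu, hvu, a]; ring
    have e2 : ⟪R g, v⟫ = b t g := by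
      rw [hR]; simp only [inner_add_left, real_inner_smul_left, hvv, huv, b]; ring
    rw [e1, e2]
  have hswap : ∫ t in (0:ℝ)..(2*Real.pi), ∫ g, gwInd (a t g) (Real.cos θ * a t g + Real.sin θ * b t g) ∂μ
      = ∫ g, (∫ t in (0:ℝ)..(2*Real.pi), gwInd (a t g) (Real.cos θ * a t g + Real.sin θ * b t g)) ∂μ := by
    simp only [intervalIntegral.integral_of_le (show (0:ℝ) ≤ 2 * Real.pi by linarith)]
    apply integral_integral_swap
    apply gwInd_int
    · simp only [a]; fun_prop
    · simp only [a, b]; fun_prop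
  have hint : Integrable (fun g => ∫ t in (0:ℝ)..(2*Real.pi), gwInd (a t g) (Real.cos θ * a t g + Real.sin θ * b t g)) μ := by
    simp only [intervalIntegral.integral_of_le (show (0:ℝ) ≤ 2 * Real.pi by linarith)]
    refine Integrable.integral_prod_left (f := fun p : E × ℝ => gwInd (a p.2 p.1) (Real.cos θ * a p.2 p.1 + Real.sin θ * b p.2 p.1)) ?_
    apply gwInd_int
    · simp only [a]; fun_prop
    · simp only [a, b]; fun_prop
  simp only [hrot] at hswap
  have hlow : ∫ g, (2 * θ) ∂μ ≤ ∫ g, (∫ t in (0:ℝ)..(2*Real.pi), gwInd (a t g) (Real.cos θ * a t g + Real.sin θ * b t g)) ∂μ := by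
    refine integral_mono_ae (integrable_const _) hint ?_
    filter_upwards [h0 u (by rintro rfl; simp at hu)] with g hg
    set z : ℂ := ⟨⟪g, u⟫, ⟪g, v⟫⟩ with hz
    have hz0 : z ≠ 0 := by intro h; apply hg; simpa [hz] using congrArg Complex.re h
    have hr : 0 < ‖z‖ := norm_pos_iff.2 hz0
    have zc : ⟪g, u⟫ = ‖z‖ * Real.cos z.arg := by rw [Complex.norm_mul_cos_arg]
    have zs : ⟪g, v⟫ = ‖z‖ * Real.sin z.arg := by rw [Complex.norm_mul_sin_arg]
    refine (gw_circle hθ0 hθ1 z.arg).trans_eq ?_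
    congr 1; ext t
    rw [← gwInd_mul hr hr]
    congr 1
    · simp only [a]; rw [zc, zs, Real.cos_add]; ring
    · simp only [a, b]; rw [zc, zs, Real.cos_sub, Real.cos_add, Real.sin_add]; ring
  rw [← hswap] at hlow
  simp at hlow
  rw [div_le_iff₀ hpi]; linarith

lemma gw_angle [FiniteDimensional ℝ E] [MeasurableSpace E] [BorelSpace E] (μ : Measure E)
    [IsProbabilityMeasure μ] (hμ : ∀ R : E ≃ₗᵢ[ℝ] E, MeasurePreserving R μ μ)
    (h0 : ∀ e : E, e ≠ 0 → ∀ᵐ g ∂μ, (⟪g, e⟫ : ℝ) ≠ 0)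
    (x y : E) (hx : x ≠ 0) (hy : y ≠ 0) :
    InnerProductGeometry.angle x y / Real.pi ≤ ∫ g, gwInd ⟪g, x⟫ ⟪g, y⟫ ∂μ := by
  have hpi := Real.pi_pos
  set θ := InnerProductGeometry.angle x y with hθ
  rcases (InnerProductGeometry.angle_nonneg x y).eq_or_lt with h | hpos
  · rw [hθ, ← h]; simp; exact integral_nonneg fun _ => gwInd_nonneg _ _
  rcases (InnerProductGeometry.angle_le_pi x y).eq_or_lt with h | hlt
  · rw [hθ, h, div_self hpi.ne']
    obtain ⟨-, r, hr, rfl⟩ := InnerProductGeometry.angle_eq_pi_iff.1 h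
    have : ∫ g, (1:ℝ) ∂μ ≤ ∫ g, gwInd ⟪g, x⟫ ⟪g, r • x⟫ ∂μ := by
      refine integral_mono_ae (integrable_const _) (gwInd_int _ (by fun_prop) (by fun_prop)) ?_
      filter_upwards [h0 x hx] with g hg
      rw [real_inner_smul_right]
      rcases lt_or_gt_of_ne hg with h | h
      · have := mul_pos_of_neg_of_neg hr h
        simp [gwInd, this.le, not_le.2 h]
      · have := mul_neg_of_neg_of_pos hr h
        simp [gwInd, not_le.2 this, h.le]
    simpa using this
  have hs : 0 < Real.sin θ := Real.sin_pos_of_pos_of_lt_pi hpos hlt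
  have hnx : 0 < ‖x‖ := norm_pos_iff.2 hx
  have hny : 0 < ‖y‖ := norm_pos_iff.2 hy
  have hxy : ⟪x, y⟫ = ‖x‖ * ‖y‖ * Real.cos θ := by
    rw [hθ, ← InnerProductGeometry.cos_angle_mul_norm_mul_norm x y]; ring
  set u := ‖x‖⁻¹ • x with hu
  set v := (Real.sin θ)⁻¹ • (‖y‖⁻¹ • y - Real.cos θ • u) with hv
  have huu : ⟪u, u⟫ = 1 := by
    rw [hu, real_inner_smul_left, real_inner_smul_right, real_inner_self_eq_norm_sq]
    field_simp
  have huy : ⟪u, y⟫ = ‖y‖ * Real.cos θ := by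
    rw [hu, real_inner_smul_left, hxy]; field_simp
  have hun : ‖u‖ = 1 := by rw [hu, norm_smul, norm_inv, norm_norm]; field_simp
  have huv : ⟪u, v⟫ = 0 := by
    rw [hv, real_inner_smul_right, inner_sub_right, real_inner_smul_right, real_inner_smul_right, huu, huy]
    field_simp; ring
  have hvn : ‖v‖ = 1 := by
    have : ‖v‖ ^ 2 = 1 := by
      rw [← real_inner_self_eq_norm_sq, hv]
      simp only [real_inner_smul_right, real_inner_smul_left, inner_sub_left, inner_sub_right, huu, huy,
        real_inner_comm u y, real_inner_self_eq_norm_sq y]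
      have := Real.sin_sq_add_cos_sq θ
      field_simp
      linarith
    nlinarith [norm_nonneg v]
  refine (gw_plane μ hμ h0 u v hun hvn huv hpos hlt).trans_eq ?_
  congr 1; ext g
  have e1 : ⟪g, x⟫ = ‖x‖ * ⟪g, u⟫ := by rw [hu, real_inner_smul_right]; field_simp
  have e2 : ⟪g, y⟫ = ‖y‖ * (Real.cos θ * ⟪g, u⟫ + Real.sin θ * ⟪g, v⟫) := by
    have e3 : ⟪g, v⟫ = (Real.sin θ)⁻¹ * (‖y‖⁻¹ * ⟪g, y⟫ - Real.cos θ * ⟪g, u⟫) := by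
      rw [hv, real_inner_smul_right, inner_sub_right, real_inner_smul_right, real_inner_smul_right]
    rw [e3]
    field_simp; ring
  rw [e1, e2, gwInd_mul hnx hny]

lemma gw_measure [FiniteDimensional ℝ E] [MeasurableSpace E] [BorelSpace E] :
    ∃ μ : Measure E, IsProbabilityMeasure μ ∧ (∀ R : E ≃ₗᵢ[ℝ] E, MeasurePreserving R μ μ) ∧
    (∀ e : E, e ≠ 0 → ∀ᵐ g ∂μ, (⟪g, e⟫ : ℝ) ≠ 0) := by
  let B := Metric.ball (0:E) 1
  have hB0 : volume B ≠ 0 := (Metric.measure_ball_pos volume _ one_pos).ne'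
  have hBt : volume B ≠ ⊤ := measure_ball_lt_top.ne
  refine ⟨ProbabilityTheory.cond volume B, ProbabilityTheory.cond_isProbabilityMeasure_of_finite hB0 hBt, ?_, ?_⟩
  · intro R
    have h := (R.measurePreserving.restrict_preimage (s := B) measurableSet_ball)
    have hp : R ⁻¹' B = B := by ext g; simp [B]
    rw [hp] at h
    exact ⟨h.measurable, by rw [ProbabilityTheory.cond, Measure.map_smul, h.map_eq]⟩
  · intro e he
    have : ∀ᵐ g ∂(volume : Measure E), (⟪g, e⟫ : ℝ) ≠ 0 := by
      have h := Measure.addHaar_submodule (volume : Measure E) (LinearMap.ker (innerSL ℝ e).toLinearMap) (by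
        intro h
        have : e ∈ LinearMap.ker (innerSL ℝ e).toLinearMap := by rw [h]; trivial
        simp at this; exact he this)
      rw [ae_iff]
      convert h using 2
      ext g; simp [real_inner_comm]
    exact ProbabilityTheory.cond_absolutelyContinuous.ae_le this
end

/-- Goemans–Williamson type bound: for non-zero vectors `{x_u} ⊂ ℝ^N`, the graph `G`
with `m` edges has a cut of size at least
`m/2 − (1/π)·Σ_{uv∈E} arcsin(⟨x_u,x_v⟩/(‖x_u‖‖x_v‖))`
(the sum over edges is written as half the sum over ordered adjacent pairs). -/
theorem stmt_18 {V : Type*} [Fintype V] [DecidableEq V]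
    (G : SimpleGraph V) [DecidableRel G.Adj] {N : ℕ}
    (x : V → EuclideanSpace ℝ (Fin N)) (hx : ∀ v, x v ≠ 0) :
    ∃ A B : Finset V, A ∪ B = Finset.univ ∧ Disjoint A B ∧
      (G.edgeFinset.card : ℝ) / 2
        - (1 / Real.pi) * ((1 / 2 : ℝ) *
            ∑ p ∈ (Finset.univ ×ˢ Finset.univ).filter
              (fun p : V × V => G.Adj p.1 p.2),
              Real.arcsin (⟪x p.1, x p.2⟫ / (‖x p.1‖ * ‖x p.2‖)))
      ≤ (epairs G A B : ℝ) := by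
  classical
  obtain ⟨μ, hμp, hμ, h0⟩ := gw_measure (E := EuclideanSpace ℝ (Fin N))
  set P := (Finset.univ ×ˢ Finset.univ).filter (fun p : V × V => G.Adj p.1 p.2) with hP
  have hi : ∀ p ∈ P, Integrable (fun g => gwInd ⟪g, x p.1⟫ ⟪g, x p.2⟫) μ :=
    fun p _ => gwInd_int _ (by fun_prop) (by fun_prop)
  obtain ⟨g, hg⟩ := exists_integral_le (μ := μ) (integrable_finsetSum P hi)
  rw [integral_finsetSum P hi] at hg
  have hpi := Real.pi_pos
  have hlow : ∑ p ∈ P, (1 / 2 - 1 / Real.pi * Real.arcsin (⟪x p.1, x p.2⟫ / (‖x p.1‖ * ‖x p.2‖)))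
      ≤ ∑ p ∈ P, gwInd ⟪g, x p.1⟫ ⟪g, x p.2⟫ := by
    refine le_trans (Finset.sum_le_sum fun p _ => ?_) hg
    refine le_trans (le_of_eq ?_) (gw_angle μ hμ h0 (x p.1) (x p.2) (hx _) (hx _))
    rw [InnerProductGeometry.angle, Real.arccos]; field_simp
  rw [Finset.sum_sub_distrib, ← Finset.mul_sum, Finset.sum_const, nsmul_eq_mul] at hlow
  have hcard : (P.card : ℝ) = 2 * G.edgeFinset.card := by
    have h1 : P.card = ∑ v, G.degree v := by
      rw [hP, Finset.card_filter, Finset.sum_product]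
      refine Finset.sum_congr rfl fun v _ => ?_
      rw [← Finset.card_filter, ← G.card_neighborFinset_eq_degree, G.neighborFinset_eq_filter]
    rw [h1, G.sum_degrees_eq_twice_card_edges]; push_cast; ring
  let A := Finset.univ.filter fun v => (0:ℝ) ≤ ⟪g, x v⟫
  let B := Finset.univ.filter fun v => ¬ (0:ℝ) ≤ ⟪g, x v⟫
  refine ⟨A, B, Finset.filter_union_filter_not_eq _ _, Finset.disjoint_filter_filter_not _ _ _, ?_⟩
  have hsum : ∑ p ∈ P, gwInd ⟪g, x p.1⟫ ⟪g, x p.2⟫ = 2 * (epairs G A B : ℝ) := by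
    have hAB : (epairs G A B : ℝ) = ∑ u, ∑ v, if G.Adj u v ∧ (0:ℝ) ≤ ⟪g, x u⟫ ∧ ¬ (0:ℝ) ≤ ⟪g, x v⟫ then (1:ℝ) else 0 := by
      rw [← Finset.sum_product', Finset.sum_boole, epairs]
      congr 2
      ext p; simp [A, B]; tauto
    have hBA : (epairs G A B : ℝ) = ∑ u, ∑ v, if G.Adj u v ∧ (0:ℝ) ≤ ⟪g, x v⟫ ∧ ¬ (0:ℝ) ≤ ⟪g, x u⟫ then (1:ℝ) else 0 := by
      rw [hAB, Finset.sum_comm]; simp only [G.adj_comm]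
    rw [two_mul]
    nth_rw 1 [hAB]
    rw [hBA, ← Finset.sum_add_distrib, hP, Finset.sum_filter, Finset.sum_product]
    refine Finset.sum_congr rfl fun u _ => ?_
    rw [← Finset.sum_add_distrib]
    refine Finset.sum_congr rfl fun v _ => ?_
    unfold gwInd
    by_cases h1 : G.Adj u v <;> by_cases h2 : (0:ℝ) ≤ ⟪g, x u⟫ <;> by_cases h3 : (0:ℝ) ≤ ⟪g, x v⟫ <;>
      simp [h1, h2, h3]
  rw [hsum, hcard] at hlow
  linarith
end
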